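/- Let m ≥ 2, r ≥ 1 and q ≥ 2 be integers, and let a = N_a/m^{s_a} ∈ ℤ[1/m] with 0 < a < r, where N_a, s_a are integers. Every element f ∈ T_{r,m} of order q, with rotation number 1/q and f(0) = a, is conjugate via a PL_m circle homeomorphism H : S_r → S_{q·N_a} to the rotation x ↦ x + N_a (mod q·N_a) of the circle S_{q·N_a}. -/

import Mathlib

/-!
Let `F` be the lift of `f` with `F 0 = a`. Since `f ^ q = 1`, the iterate `F^[q]` lifts the identity,
so it is the translation by `p * r` for an integer `p` (`lift_unique`). From `0 < F 0 < r` one gets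
`0 < p < q`, and the rotation number `p / q` is `1 / q` modulo `1`, so `p = 1`: the map `F` is a
`q`-th root of the translation by `r`, and `0 < F 0 < ... < F^[q] 0 = r`.

Such a root is conjugate to `y ↦ y + 1` by a bijection `K` of `ℝ` that is linear on `[0, 1]`
(`exists_linearization`). Put `H = Na * K⁻¹`. Then `H ∘ F = H + Na` and `H (x + r) = H x + q * Na`,
so `H` descends to the required conjugacy of circles. On `[0, a]` it has slope
`Na / a = m ^ sa`, and the relation `H ∘ F = H + Na` carries the `PL_m` property from
`[F^[n] 0, F^[n + 1] 0]` to the next such interval (`push_chain`), so that `H` is `PL_m` on `[0, r]`.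
The `PL_m` condition is handled as the existence of a chain of affine pieces with endpoints and
constant terms in `ℤ[1/m]`, which makes concatenation, restriction and transport easy inductions.
-/

open Filter Topology

/-- The set `ℤ[1/m] = {N·m^s : N, s ∈ ℤ}` as a subset of `ℝ`. -/
def ZInvM (m : ℕ) : Set ℝ := {x : ℝ | ∃ N s : ℤ, x = (N : ℝ) * (m : ℝ) ^ s}

/-- `F : ℝ → ℝ` is a lift of an orientation-preserving `PL_m` homeomorphism from the
circle `ℝ/rℤ` to the circle `ℝ/r'ℤ`: it is strictly increasing, commutes appropriately
with the translations, and is affine on the pieces of a finite subdivision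
`0 = a₀ < a₁ < ... < aₙ = r` of `[0, r]`, with slopes powers of `m`, breakpoints in
`ℤ[1/m]` and images of breakpoints in `ℤ[1/m]`. -/
def IsPLmLift (m : ℕ) (r r' : ℝ) (F : ℝ → ℝ) : Prop :=
  StrictMono F ∧ (∀ x : ℝ, F (x + r) = F x + r') ∧
    ∃ (n : ℕ) (a : Fin (n + 1) → ℝ),
      StrictMono a ∧ a 0 = 0 ∧ a (Fin.last n) = r ∧
      (∀ i, a i ∈ ZInvM m) ∧ (∀ i, F (a i) ∈ ZInvM m) ∧
      ∀ i : Fin n, ∃ (s : ℤ) (β : ℝ),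
        ∀ x ∈ Set.Icc (a i.castSucc) (a i.succ), F x = (m : ℝ) ^ s * x + β

/-- Membership in the Brown–Thompson group `T_{r,m}`, viewed inside the permutations of
the circle `ℝ/rℤ`: `f` is induced by a `PL_m` lift. -/
def InT (r m : ℕ) (f : Equiv.Perm (AddCircle (r : ℝ))) : Prop :=
  ∃ F : ℝ → ℝ, IsPLmLift m r r F ∧ ∀ x : ℝ, f ↑x = ↑(F x)

/-- The circle homeomorphism `f` of `ℝ/rℤ` has rotation number `ρ ∈ ℝ/ℤ`: some monotone
lift `F` of `f` commuting with translation by `r` satisfies `F^[n] 0 / (r·n) → L`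
with `L ≡ ρ (mod 1)`. -/
def HasRotNum (r : ℝ) (f : Equiv.Perm (AddCircle r)) (ρ : AddCircle (1 : ℝ)) : Prop :=
  ∃ F : ℝ → ℝ, Monotone F ∧ (∀ x : ℝ, F (x + r) = F x + r) ∧ (∀ x : ℝ, f ↑x = ↑(F x)) ∧
    ∃ L : ℝ, Tendsto (fun n : ℕ => F^[n] 0 / (r * n)) atTop (𝓝 L) ∧
      ((L : AddCircle (1 : ℝ)) = ρ)

/-! ### Arithmetic of `ℤ[1/m]` -/

theorem zInvM_iff {m : ℕ} (hm : 2 ≤ m) (x : ℝ) :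
    x ∈ ZInvM m ↔ ∃ (n : ℕ) (N : ℤ), x * (m : ℝ) ^ n = N := by
  have hm0 : (m : ℝ) ≠ 0 := by positivity
  constructor
  · rintro ⟨N, s, rfl⟩
    obtain ⟨n, rfl | rfl⟩ := s.eq_nat_or_neg
    · exact ⟨0, N * m ^ n, by simp⟩
    · exact ⟨n, N, by rw [zpow_neg, zpow_natCast]; field_simp⟩
  · rintro ⟨n, N, h⟩
    refine ⟨N, -n, ?_⟩
    rw [← h, zpow_neg, zpow_natCast]; field_simp

theorem zInvM_add {m : ℕ} (hm : 2 ≤ m) {x y : ℝ} (hx : x ∈ ZInvM m) (hy : y ∈ ZInvM m) :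
    x + y ∈ ZInvM m := by
  rw [zInvM_iff hm] at *
  obtain ⟨n, N, h⟩ := hx
  obtain ⟨k, K, h'⟩ := hy
  refine ⟨n + k, N * m ^ k + K * m ^ n, ?_⟩
  push_cast
  rw [← h, ← h']; ring

theorem zInvM_neg {m : ℕ} {x : ℝ} (hx : x ∈ ZInvM m) : -x ∈ ZInvM m := by
  obtain ⟨N, s, rfl⟩ := hx
  exact ⟨-N, s, by push_cast; ring⟩

theorem zInvM_sub {m : ℕ} (hm : 2 ≤ m) {x y : ℝ} (hx : x ∈ ZInvM m) (hy : y ∈ ZInvM m) :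
    x - y ∈ ZInvM m := by
  rw [sub_eq_add_neg]; exact zInvM_add hm hx (zInvM_neg hy)

theorem zInvM_zpow_mul {m : ℕ} (hm : 2 ≤ m) {x : ℝ} (hx : x ∈ ZInvM m) (s : ℤ) :
    (m : ℝ) ^ s * x ∈ ZInvM m := by
  have hm0 : (m : ℝ) ≠ 0 := by positivity
  obtain ⟨N, t, rfl⟩ := hx
  exact ⟨N, s + t, by rw [zpow_add₀ hm0]; ring⟩

theorem zInvM_int (m : ℕ) (N : ℤ) : (N : ℝ) ∈ ZInvM m := ⟨N, 0, by simp⟩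

/-! ### Chains of affine pieces -/

/-- `F` is affine on `[u, v]`, where `u < v` lie in `ℤ[1/m]`, with slope a power of `m` and
constant term in `ℤ[1/m]`. A map is `PL_m` on `[u, v]` when the pair `(u, v)` lies in the
reflexive transitive closure of `Piece m F`. -/
structure Piece (m : ℕ) (F : ℝ → ℝ) (u v : ℝ) : Prop where
  lt : u < v
  left : u ∈ ZInvM m
  right : v ∈ ZInvM m
  aff : ∃ s : ℤ, ∃ β ∈ ZInvM m, ∀ x ∈ Set.Icc u v, F x = (m : ℝ) ^ s * x + β

open Relation

theorem Piece.sub {m : ℕ} {F : ℝ → ℝ} {u v u' v' : ℝ} (h : Piece m F u v) (hu : u ≤ u')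
    (hv : v' ≤ v) (huv : u' < v') (hu' : u' ∈ ZInvM m) (hv' : v' ∈ ZInvM m) :
    Piece m F u' v' := by
  obtain ⟨s, β, hβ, H⟩ := h.aff
  exact ⟨huv, hu', hv', s, β, hβ, fun x hx => H x ⟨hu.trans hx.1, hx.2.trans hv⟩⟩

theorem chain_le {m : ℕ} {F : ℝ → ℝ} {u v : ℝ} (h : ReflTransGen (Piece m F) u v) : u ≤ v := by
  induction h with
  | refl => exact le_rfl
  | tail _ h ih => exact ih.trans h.lt.le

/-- A `PL_m` map stays `PL_m` on subintervals with endpoints in `ℤ[1/m]`. -/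
theorem chain_restrict {m : ℕ} {F : ℝ → ℝ} {p w : ℝ} (h : ReflTransGen (Piece m F) p w) :
    ∀ u v, u ∈ ZInvM m → v ∈ ZInvM m → p ≤ u → u < v → v ≤ w →
      ReflTransGen (Piece m F) u v := by
  induction h with
  | refl => intro u v _ _ h1 h2 h3; linarith
  | @tail b c hb hc ih =>
    intro u v hu hv hpu huv hvw
    rcases le_or_gt v b with h1 | h1
    · exact ih u v hu hv hpu huv h1
    rcases le_or_gt b u with h2 | h2
    · exact .single (hc.sub h2 hvw huv hu hv)
    · exact (ih u b hu hc.left hpu h2 le_rfl).tail (hc.sub le_rfl hvw h1 hc.left hv)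

/-- Pushing one affine piece of `H` forward along a `PL_m` map `F` with `H ∘ F = H + c`. -/
theorem push_piece {m : ℕ} (hm : 2 ≤ m) {F H : ℝ → ℝ} {c : ℝ} (hc : c ∈ ZInvM m)
    (hF : StrictMono F) (hH : ∀ x, H (F x) = H x + c) {u v : ℝ}
    (h : ReflTransGen (Piece m F) u v) {s : ℤ} {β : ℝ} (hβ : β ∈ ZInvM m)
    (haff : ∀ x ∈ Set.Icc u v, H x = (m : ℝ) ^ s * x + β) :
    ReflTransGen (Piece m H) (F u) (F v) := by
  have hm0 : (m : ℝ) ≠ 0 := by positivity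
  induction h with
  | refl => exact .refl
  | @tail b d hb hd ih =>
    refine (ih fun x hx => haff x ⟨hx.1, hx.2.trans hd.lt.le⟩).tail ?_
    have hub := chain_le hb
    obtain ⟨t, γ, hγ, hF'⟩ := hd.aff
    have hFb := hF' b ⟨le_rfl, hd.lt.le⟩
    have hFd := hF' d ⟨hd.lt.le, le_rfl⟩
    refine ⟨hF hd.lt, ?_, ?_, s - t, β + c - (m : ℝ) ^ (s - t) * γ, ?_, ?_⟩
    · rw [hFb]; exact zInvM_add hm (zInvM_zpow_mul hm hd.left _) hγ
    · rw [hFd]; exact zInvM_add hm (zInvM_zpow_mul hm hd.right _) hγ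
    · exact zInvM_sub hm (zInvM_add hm hβ hc) (zInvM_zpow_mul hm hγ _)
    · rintro y ⟨hy1, hy2⟩
      have hpos : (0 : ℝ) < (m : ℝ) ^ t := by positivity
      obtain ⟨x, rfl⟩ : ∃ x, y = (m : ℝ) ^ t * x + γ := ⟨(y - γ) / (m : ℝ) ^ t, by field_simp; ring⟩
      have hx : x ∈ Set.Icc b d := by
        rw [hFb] at hy1
        rw [hFd] at hy2
        exact ⟨le_of_mul_le_mul_left (by linarith) hpos, le_of_mul_le_mul_left (by linarith) hpos⟩
      rw [← hF' x hx, hH, haff x ⟨hub.trans hx.1, hx.2⟩, hF' x hx, zpow_sub₀ hm0]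
      field_simp
      ring

/-- If `H ∘ F = H + c` and `H` is `PL_m` on `[u, v]`, then `H` is `PL_m` on `[F u, F v]`. -/
theorem push_chain {m : ℕ} (hm : 2 ≤ m) {F H : ℝ → ℝ} {c p w : ℝ} (hc : c ∈ ZInvM m)
    (hF : StrictMono F) (hH : ∀ x, H (F x) = H x + c) (hpw : ReflTransGen (Piece m F) p w)
    {u v : ℝ} (hu : p ≤ u) (hv : v ≤ w) (h : ReflTransGen (Piece m H) u v) :
    ReflTransGen (Piece m H) (F u) (F v) := by
  induction h with
  | refl => exact .refl
  | @tail b d hb hd ih =>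
    obtain ⟨s, β, hβ, haff⟩ := hd.aff
    exact (ih (hd.lt.le.trans hv)).trans (push_piece hm hc hF hH
      (chain_restrict hpw b d hd.left hd.right (hu.trans (chain_le hb)) hd.lt hv) hβ haff)

/-- The finite-subdivision form of being `PL_m` gives a chain; the constant terms are
automatically in `ℤ[1/m]` since breakpoints are mapped there. -/
theorem chain_of_isPLmLift {m : ℕ} (hm : 2 ≤ m) {r r' : ℝ} {F : ℝ → ℝ}
    (h : IsPLmLift m r r' F) : ReflTransGen (Piece m F) 0 r := by
  obtain ⟨-, -, n, a, ha, h0, hr, haZ, hFa, haff⟩ := h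
  have key : ∀ i : Fin (n + 1), ReflTransGen (Piece m F) (a 0) (a i) := by
    intro i
    induction i using Fin.induction with
    | zero => exact .refl
    | succ i ih =>
      refine ih.tail ?_
      have hlt : a i.castSucc < a i.succ := ha i.castSucc_lt_succ
      obtain ⟨s, β, H⟩ := haff i
      refine ⟨hlt, haZ _, haZ _, s, β, ?_, H⟩
      have := H _ ⟨le_rfl, hlt.le⟩
      rw [show β = F (a i.castSucc) - (m : ℝ) ^ s * a i.castSucc by linarith]
      exact zInvM_sub hm (hFa _) (zInvM_zpow_mul hm (haZ _) _)
  have := key (Fin.last n)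
  rwa [h0, hr] at this

theorem isPLmLift_of_chain {m : ℕ} (hm : 2 ≤ m) {r r' : ℝ} {F : ℝ → ℝ} (hr : 0 < r)
    (hF : StrictMono F) (hFr : ∀ x, F (x + r) = F x + r')
    (h : ReflTransGen (Piece m F) 0 r) : IsPLmLift m r r' F := by
  refine ⟨hF, hFr, ?_⟩
  have key : ∃ (n : ℕ) (a : Fin (n + 1) → ℝ), a 0 = 0 ∧ a (Fin.last n) = r ∧
      ∀ i : Fin n, Piece m F (a i.castSucc) (a i.succ) := by
    clear hFr hr
    induction h with
    | refl => exact ⟨0, fun _ => 0, rfl, rfl, fun i => i.elim0⟩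
    | @tail b c hb hc ih =>
      obtain ⟨n, a, h0, hl, H⟩ := ih
      refine ⟨n + 1, Fin.snoc a c, ?_, by simp, fun i => ?_⟩
      · rw [← Fin.castSucc_zero, Fin.snoc_castSucc, h0]
      · induction i using Fin.lastCases with
        | last => simpa [hl] using hc
        | cast i => rw [Fin.snoc_castSucc, Fin.succ_castSucc, Fin.snoc_castSucc]; exact H i
  obtain ⟨n, a, h0, hl, H⟩ := key
  have haZ : ∀ i, a i ∈ ZInvM m := by
    intro i
    induction i using Fin.cases with
    | zero => rw [h0]; simpa using zInvM_int m 0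
    | succ i => exact (H i).right
  have hFZ : ∀ x y, Piece m F x y → F x ∈ ZInvM m ∧ F y ∈ ZInvM m := by
    intro x y hxy
    obtain ⟨s, β, hβ, h⟩ := hxy.aff
    rw [h x ⟨le_rfl, hxy.lt.le⟩, h y ⟨hxy.lt.le, le_rfl⟩]
    exact ⟨zInvM_add hm (zInvM_zpow_mul hm hxy.left _) hβ,
      zInvM_add hm (zInvM_zpow_mul hm hxy.right _) hβ⟩
  refine ⟨n, a, Fin.strictMono_iff_lt_succ.2 fun i => (H i).lt, h0, hl, haZ, ?_, fun i => ?_⟩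
  · intro i
    induction i using Fin.cases with
    | zero =>
      -- `n = 0` would give `r = a 0 = 0`, so there is a first piece.
      rcases n with _ | n
      · exact absurd (h0.symm.trans hl) hr.ne
      · exact (hFZ _ _ (H 0)).1
    | succ i => exact (hFZ _ _ (H i)).2
  · obtain ⟨s, β, -, h⟩ := (H i).aff
    exact ⟨s, β, h⟩

/-! ### Lifts of circle maps -/

theorem map_add_int_mul {F : ℝ → ℝ} {r c : ℝ} (h : ∀ x, F (x + r) = F x + c) (k : ℤ) (x : ℝ) :
    F (x + k * r) = F x + k * c := by
  induction k using Int.induction_on with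
  | zero => simp
  | succ k ih =>
    push_cast at *
    rw [show x + ((k : ℝ) + 1) * r = x + k * r + r by ring, h, ih]; ring
  | pred k ih =>
    push_cast at *
    have := h (x + (-(k : ℝ) - 1) * r)
    rw [show x + (-(k : ℝ) - 1) * r + r = x + -(k : ℝ) * r by ring, ih] at this
    linarith

theorem coe_eq_coe_iff_int {r x y : ℝ} :
    (x : AddCircle r) = (y : AddCircle r) ↔ ∃ k : ℤ, y = x + k * r := by
  rw [← sub_eq_zero, ← AddCircle.coe_sub, AddCircle.coe_eq_zero_iff]
  constructor
  · rintro ⟨k, hk⟩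
    rw [zsmul_eq_mul] at hk
    exact ⟨-k, by push_cast; linarith⟩
  · rintro ⟨k, hk⟩
    exact ⟨-k, by rw [zsmul_eq_mul]; push_cast; linarith⟩

/-- Two monotone degree-one lifts of the same circle map, one of which is strictly monotone,
differ by a constant integer translation. Continuity is not needed: on `[0, r)` the integer
difference can neither drop below nor exceed its value at `0`. -/
theorem lift_unique {r : ℝ} (hr : 0 < r) {F G : ℝ → ℝ} (hF : StrictMono F) (hG : Monotone G)
    (hFr : ∀ x, F (x + r) = F x + r) (hGr : ∀ x, G (x + r) = G x + r)
    (h : ∀ x, (F x : AddCircle r) = (G x : AddCircle r)) :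
    ∃ k : ℤ, ∀ x, G x = F x + k * r := by
  simp only [coe_eq_coe_iff_int] at h
  choose k hk using h
  have base : ∀ x, 0 ≤ x → x < r → k x = k 0 := by
    intro x h0 h1
    have e0 := hk 0
    have ex := hk x
    have eF := hFr 0
    have eG := hGr 0
    rw [zero_add] at eF eG
    have l1 : F x < F r := hF h1
    have l2 : G 0 ≤ G x := hG h0
    have l3 : G x ≤ G r := hG h1.le
    rcases h0.eq_or_lt with rfl | h0
    · rfl
    have l4 : F 0 < F x := hF h0
    have a1 : ((k 0 : ℝ) - 1) * r < k x * r := by linarith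
    have a2 : (k x : ℝ) * r < (k 0 + 1) * r := by linarith
    have b1 := lt_of_mul_lt_mul_right a1 hr.le
    have b2 := lt_of_mul_lt_mul_right a2 hr.le
    have c1 : k 0 - 1 < k x := by exact_mod_cast b1
    have c2 : k x < k 0 + 1 := by exact_mod_cast b2
    omega
  refine ⟨k 0, fun x => ?_⟩
  set j := ⌊x / r⌋
  have hj1 : (j : ℝ) * r ≤ x := (le_div_iff₀ hr).1 (Int.floor_le _)
  have hj2 : x < (j + 1) * r := (div_lt_iff₀ hr).1 (Int.lt_floor_add_one _)
  have e := hk (x - j * r)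
  rw [base _ (by linarith) (by linarith)] at e
  have f1 := map_add_int_mul hFr j (x - j * r)
  have f2 := map_add_int_mul hGr j (x - j * r)
  rw [sub_add_cancel] at f1 f2
  linarith

theorem iterate_add {F : ℝ → ℝ} {r : ℝ} (h : ∀ x, F (x + r) = F x + r) (n : ℕ) (x : ℝ) :
    F^[n] (x + r) = F^[n] x + r := by
  induction n generalizing x with
  | zero => rfl
  | succ n ih => rw [Function.iterate_succ_apply, h, ih, Function.iterate_succ_apply]

theorem iterate_lift {r : ℝ} {f : Equiv.Perm (AddCircle r)} {F : ℝ → ℝ}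
    (h : ∀ x : ℝ, f ↑x = ↑(F x)) (n : ℕ) (x : ℝ) : (f ^ n) ↑x = ↑(F^[n] x) := by
  induction n generalizing x with
  | zero => rfl
  | succ n ih => rw [pow_succ, Equiv.Perm.mul_apply, h, ih, Function.iterate_succ_apply]

theorem iterate_const_add {F G : ℝ → ℝ} {c r : ℝ} {k : ℤ} (hc : c = k * r)
    (h : ∀ x, F (x + r) = F x + r) (hG : ∀ x, G x = F x + c) (n : ℕ) (x : ℝ) :
    G^[n] x = F^[n] x + n * c := by
  induction n with
  | zero => simp
  | succ n ih =>
    rw [Function.iterate_succ_apply', ih, hG, Function.iterate_succ_apply', hc]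
    have := map_add_int_mul h (n * k) (F^[n] x)
    push_cast at this ⊢
    rw [← mul_assoc, this]; ring

theorem iterate_mul_of_translation {F : ℝ → ℝ} {q : ℕ} {c : ℝ} (h : ∀ x, F^[q] x = x + c)
    (j : ℕ) : F^[q * j] 0 = j * c := by
  induction j with
  | zero => simp
  | succ j ih =>
    rw [mul_add, mul_one, add_comm, Function.iterate_add_apply, ih, h]; push_cast; ring

/-- An order isomorphism of `ℝ` that is equivariant for the translations by `r` and `r'`
descends to a bijection between the circles. -/
theorem exists_circle_equiv {r r' : ℝ} (H : ℝ ≃o ℝ)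
    (h : ∀ x, H (x + r) = H x + r') :
    ∃ E : AddCircle r ≃ AddCircle r', ∀ x : ℝ, E ↑x = ↑(H x) := by
  have hiff : ∀ x y : ℝ, (QuotientAddGroup.leftRel (AddSubgroup.zmultiples r)) x y ↔
      (QuotientAddGroup.leftRel (AddSubgroup.zmultiples r')) (H x) (H y) := by
    intro x y
    rw [← Quotient.eq (r := QuotientAddGroup.leftRel (AddSubgroup.zmultiples r)),
      ← Quotient.eq (r := QuotientAddGroup.leftRel (AddSubgroup.zmultiples r'))]
    change (x : AddCircle r) = (y : AddCircle r) ↔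
      ((H x : ℝ) : AddCircle r') = ((H y : ℝ) : AddCircle r')
    rw [coe_eq_coe_iff_int, coe_eq_coe_iff_int]
    refine exists_congr fun k => ?_
    rw [← map_add_int_mul h, H.injective.eq_iff]
  exact ⟨Quotient.congr H.toEquiv hiff, fun x => rfl⟩

/-! ### Linearizing a root of a translation -/

/-- If `e ^ q` is the translation by `r > 0` and `e 0 = a > 0`, then `e` is conjugate to
`y ↦ y + 1` by an increasing bijection `K` that is linear on `[0, 1]`, namely
`K y = e ^ ⌊y⌋ (a * fract y)`. -/
theorem exists_linearization (e : ℝ ≃o ℝ) {a r : ℝ} {q : ℕ} (ha : 0 < a) (hr : 0 < r)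
    (h0 : e 0 = a) (hq : ∀ x, (e ^ q) x = x + r) :
    ∃ K : ℝ ≃o ℝ, (∀ y, K (y + 1) = e (K y)) ∧ ∀ y ∈ Set.Icc (0 : ℝ) 1, K y = a * y := by
  have hsucc : ∀ (n : ℤ) (x : ℝ), (e ^ (n + 1)) x = (e ^ n) (e x) := by
    intro n x; rw [zpow_add_one]; rfl
  have hsucc' : ∀ (n : ℤ) (x : ℝ), (e ^ (n + 1)) x = e ((e ^ n) x) := by
    intro n x; rw [add_comm, zpow_one_add]; rfl
  have hmono : Monotone fun n : ℤ => (e ^ n) (0 : ℝ) := by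
    refine monotone_int_of_le_succ fun n => ?_
    rw [hsucc, h0]
    exact (e ^ n).monotone ha.le
  have htr : ∀ j : ℤ, (e ^ ((q : ℤ) * j)) (0 : ℝ) = j * r := by
    intro j
    rw [zpow_mul, zpow_natCast]
    induction j using Int.induction_on with
    | zero => simp
    | succ k ih =>
      rw [add_comm, zpow_one_add]
      change (e ^ q) (((e ^ q) ^ (k : ℤ)) 0) = _
      rw [ih, hq]; push_cast; ring
    | pred k ih =>
      apply (e ^ q).injective
      rw [hq (_ * r)]
      have : (e ^ q) (((e ^ q) ^ (-(k : ℤ) - 1)) 0) = ((e ^ q) ^ (1 + (-(k : ℤ) - 1))) 0 := by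
        rw [zpow_one_add]; rfl
      rw [this, show 1 + (-(k : ℤ) - 1) = -(k : ℤ) by ring, ih]; push_cast; ring
  let K : ℝ → ℝ := fun y => (e ^ ⌊y⌋) (a * Int.fract y)
  have hK1 : ∀ y, K (y + 1) = e (K y) := by
    intro y
    simp only [K]
    rw [Int.floor_add_one, Int.fract_add_one, hsucc']
  have hK01 : ∀ y ∈ Set.Icc (0 : ℝ) 1, K y = a * y := by
    rintro y ⟨hy0, hy1⟩
    rcases hy1.eq_or_lt with rfl | hy1
    · simp [K, h0]
    · have hf : ⌊y⌋ = 0 := Int.floor_eq_zero_iff.2 ⟨hy0, hy1⟩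
      have hfr : Int.fract y = y := Int.fract_eq_self.2 ⟨hy0, hy1⟩
      simp only [K, hf, hfr, zpow_zero]
      rfl
  have hKmono : StrictMono K := by
    intro x y hxy
    rcases (Int.floor_mono hxy.le).eq_or_lt with h | h
    · simp only [K]
      rw [h]
      refine (e ^ ⌊y⌋).strictMono ?_
      simp only [Int.fract, h]
      exact mul_lt_mul_of_pos_left (by linarith) ha
    · calc K x < (e ^ ⌊x⌋) a := (e ^ ⌊x⌋).strictMono (by nlinarith [Int.fract_lt_one x])
        _ = (e ^ (⌊x⌋ + 1)) 0 := by rw [hsucc, h0]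
        _ ≤ (e ^ ⌊y⌋) 0 := hmono h
        _ ≤ K y := (e ^ ⌊y⌋).monotone (mul_nonneg ha.le (Int.fract_nonneg y))
  have hKsurj : Function.Surjective K := by
    intro x
    obtain ⟨n, hn, hmax⟩ := Int.exists_greatest_of_bdd (P := fun n : ℤ => (e ^ n) (0 : ℝ) ≤ x)
      (by
        obtain ⟨b, hb⟩ := exists_int_gt (x / r)
        refine ⟨(q : ℤ) * b, fun z hz => ?_⟩
        by_contra! hcon
        have h1 : (e ^ ((q : ℤ) * b)) (0 : ℝ) ≤ (e ^ z) 0 := hmono hcon.le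
        rw [htr] at h1
        have h2 := (div_lt_iff₀ hr).1 hb
        linarith)
      (by
        obtain ⟨b, hb⟩ := exists_int_lt (x / r)
        exact ⟨(q : ℤ) * b, by rw [htr]; exact ((lt_div_iff₀ hr).1 hb).le⟩)
    have hn' : x < (e ^ (n + 1)) 0 := by
      by_contra! hcon
      have := hmax _ hcon
      omega
    obtain ⟨z, rfl⟩ := (e ^ n).surjective x
    rw [hsucc, h0] at hn'
    have hz0 : 0 ≤ z := (e ^ n).le_iff_le.1 hn
    have hz1 : z < a := (e ^ n).lt_iff_lt.1 hn'
    have hza : z / a ∈ Set.Ico (0 : ℝ) 1 := ⟨by positivity, (div_lt_one ha).2 hz1⟩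
    refine ⟨n + z / a, ?_⟩
    simp only [K]
    rw [Int.floor_intCast_add, Int.fract_intCast_add, Int.fract_eq_self.2 hza,
      Int.floor_eq_zero_iff.2 hza, add_zero, mul_div_cancel₀ _ ha.ne']
  exact ⟨hKmono.orderIsoOfSurjective K hKsurj, hK1, hK01⟩

/-- Every `f ∈ T_{r,m}` of order `q`, rotation number `1/q` and `f(0) = a = N_a/m^{s_a}`
is conjugate, via a `PL_m` homeomorphism `H : S_r → S_{q·N_a}`, to the rotation
`x ↦ x + N_a` of the circle `S_{q·N_a}`. -/
theorem conj_to_rotation_of_circle (m r q : ℕ) (hm : 2 ≤ m) (hr : 1 ≤ r) (hq : 2 ≤ q)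
    (Na sa : ℤ) (a : ℝ) (ha : a = (Na : ℝ) / (m : ℝ) ^ sa) (ha0 : 0 < a) (har : a < (r : ℝ))
    (f : Equiv.Perm (AddCircle (r : ℝ))) (hf : InT r m f) (hord : orderOf f = q)
    (hrot : HasRotNum r f ((1 / (q : ℝ) : ℝ) : AddCircle (1 : ℝ)))
    (hf0 : f ((0 : ℝ) : AddCircle (r : ℝ)) = ((a : ℝ) : AddCircle (r : ℝ))) :
    ∃ H : AddCircle (r : ℝ) ≃ AddCircle ((q : ℝ) * (Na : ℝ)),
      (∃ F : ℝ → ℝ, IsPLmLift m (r : ℝ) ((q : ℝ) * (Na : ℝ)) F ∧ ∀ x : ℝ, H ↑x = ↑(F x)) ∧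
      ∀ x : AddCircle (r : ℝ),
        H (f x) = H x + ((Na : ℝ) : AddCircle ((q : ℝ) * (Na : ℝ))) := by
  have hr0 : (0 : ℝ) < r := by exact_mod_cast hr
  have hm0 : (0 : ℝ) < m := by positivity
  have hq0 : (0 : ℝ) < q := by positivity
  have hNa : (0 : ℝ) < Na := by
    rw [ha] at ha0
    exact (div_pos_iff_of_pos_right (zpow_pos hm0 sa)).1 ha0
  -- Normalize the lift so that it sends `0` to `a`.
  obtain ⟨F, hF, hFr, hFf, hF0, hFch⟩ : ∃ F : ℝ → ℝ, StrictMono F ∧ (∀ x, F (x + r) = F x + r) ∧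
      (∀ x : ℝ, f ↑x = ↑(F x)) ∧ F 0 = a ∧ ReflTransGen (Piece m F) 0 r := by
    obtain ⟨F₀, hlift, hf₀⟩ := hf
    have hch := chain_of_isPLmLift hm hlift
    obtain ⟨k, hk⟩ := coe_eq_coe_iff_int.1 ((hf₀ 0).symm.trans hf0)
    refine ⟨fun x => F₀ x + k * r, fun x y h => by simpa using hlift.1 h,
      fun x => by simp only [hlift.2.1]; ring, fun x => ?_, hk.symm, ?_⟩
    · rw [hf₀]; exact coe_eq_coe_iff_int.2 ⟨k, rfl⟩
    · refine ReflTransGen.mono (fun u v h => ?_) _ _ hch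
      obtain ⟨s, β, hβ, H⟩ := h.aff
      refine ⟨h.lt, h.left, h.right, s, β + k * r, zInvM_add hm hβ ?_, fun x hx => ?_⟩
      · simpa using zInvM_int m (k * r)
      · simp only [H x hx]; ring
  -- Since `f ^ q = 1`, the lift satisfies `F^[q] = (· + p * r)` for some integer `p`.
  have hfq : f ^ q = 1 := hord ▸ pow_orderOf_eq_one f
  obtain ⟨p, hp⟩ := lift_unique hr0 strictMono_id (hF.monotone.iterate q) (fun x => rfl)
    (iterate_add hFr q) (fun x => by rw [← iterate_lift hFf, hfq]; rfl)
  have hp' : ∀ x, F^[q] x = x + p * r := hp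
  -- The bounds `0 < F 0 < r` give `0 < F^[n] 0 < n * r`, hence `0 < p < q`.
  have hbd : ∀ n : ℕ, 0 < F^[n + 1] 0 ∧ F^[n + 1] 0 < (n + 1) * r := by
    intro n
    induction n with
    | zero => simpa [hF0] using ⟨ha0, har⟩
    | succ n ih =>
      rw [Function.iterate_succ_apply']
      have h1 := hF ih.1
      have h2 := hF ih.2
      have h3 := map_add_int_mul hFr (n + 1) 0
      push_cast at h3 ⊢
      rw [zero_add] at h3
      exact ⟨by linarith, by linarith⟩
  obtain ⟨hp0, hpq⟩ : 0 < p ∧ p < q := by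
    have := hbd (q - 1)
    have hq1 : (((q - 1 : ℕ) : ℝ) + 1) = q := by
      have : q - 1 + 1 = q := by omega
      exact_mod_cast this
    rw [show q - 1 + 1 = q by omega, hq1, hp', zero_add] at this
    have h1 : (0 : ℝ) < p := (pos_iff_pos_of_mul_pos this.1).2 hr0
    have h2 : (p : ℝ) < q := lt_of_mul_lt_mul_right this.2 hr0.le
    exact ⟨by exact_mod_cast h1, by exact_mod_cast h2⟩
  -- The rotation number forces `p ≡ 1` modulo `q`, hence `p = 1`.
  obtain rfl : p = 1 := by
    obtain ⟨G, hG, hGr, hGf, L, hL, hLq⟩ := hrot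
    obtain ⟨k, hk⟩ := lift_unique hr0 hF hG hFr hGr (fun x => by rw [← hFf, hGf])
    have hGit := iterate_const_add (k := k) rfl hFr hk
    have hsub : Tendsto (fun j : ℕ => q * (j + 1)) atTop atTop :=
      tendsto_atTop_mono (fun j => show j ≤ q * (j + 1) by nlinarith) tendsto_id
    have hlim := hL.comp hsub
    have hconst : ((fun n : ℕ => G^[n] 0 / ((r : ℝ) * n)) ∘ fun j : ℕ => q * (j + 1)) =
        fun _ => (p : ℝ) / q + k := by
      funext j
      have hj : (0 : ℝ) < (j : ℝ) + 1 := by positivity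
      simp only [Function.comp_apply]
      rw [hGit, iterate_mul_of_translation hp']
      push_cast
      field_simp
    rw [hconst] at hlim
    have hLe : L = (p : ℝ) / q + k := tendsto_nhds_unique hlim tendsto_const_nhds
    obtain ⟨t, ht⟩ := coe_eq_coe_iff_int.1 hLq
    rw [hLe] at ht
    field_simp at ht
    have ht' : (1 : ℤ) = p + q * (k + t) := by
      have : (1 : ℝ) = ((p + q * (k + t) : ℤ) : ℝ) := by push_cast; linarith
      exact_mod_cast this
    have h1 : (q : ℤ) ∣ p - 1 := ⟨-(k + t), by linarith⟩
    have h2 := Int.eq_zero_of_dvd_of_nonneg_of_lt (by omega) (by omega) h1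
    omega
  have hFq : ∀ x, F^[q] x = x + r := by simpa using hp'
  have hFsurj : Function.Surjective F := fun x => by
    refine ⟨F^[q - 1] (x - r), ?_⟩
    rw [← Function.iterate_succ_apply' F, show (q - 1).succ = q by omega, hFq, sub_add_cancel]
  let e : ℝ ≃o ℝ := hF.orderIsoOfSurjective F hFsurj
  have heF : ∀ x, e x = F x := fun _ => rfl
  have hepow : ∀ (n : ℕ) (x : ℝ), (e ^ n) x = F^[n] x := by
    intro n
    induction n with
    | zero => intro x; rfl
    | succ n ih =>
      intro x
      rw [pow_succ, Function.iterate_succ_apply, ← ih]; rfl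
  obtain ⟨K, hK1, hK01⟩ := exists_linearization e ha0 hr0 hF0
    (fun x => by rw [hepow, hFq])
  let H : ℝ ≃o ℝ := K.symm.trans (OrderIso.mulLeft₀ (Na : ℝ) hNa)
  have hHdef : ∀ x, H x = Na * K.symm x := fun _ => rfl
  have hHF : ∀ x, H (F x) = H x + Na := by
    intro x
    have : K.symm (F x) = K.symm x + 1 := by
      rw [OrderIso.symm_apply_eq, hK1, OrderIso.apply_symm_apply]; rfl
    rw [hHdef, hHdef, this]; ring
  have hHit : ∀ (n : ℕ) (x : ℝ), H (F^[n] x) = H x + n * Na := by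
    intro n
    induction n with
    | zero => simp
    | succ n ih =>
      intro x
      rw [Function.iterate_succ_apply', hHF, ih]; push_cast; ring
  have hHr : ∀ x, H (x + r) = H x + q * Na := by
    intro x; rw [← hFq, hHit]
  have haZ : a ∈ ZInvM m := ⟨Na, -sa, by rw [ha, zpow_neg]; rfl⟩
  have h0Z : (0 : ℝ) ∈ ZInvM m := by simpa using zInvM_int m 0
  have hHa : Piece m H 0 a := by
    refine ⟨ha0, h0Z, haZ, sa, 0, h0Z, fun x hx => ?_⟩
    have hK : K.symm x = x / a := by
      rw [OrderIso.symm_apply_eq, hK01 _ ⟨div_nonneg hx.1 ha0.le, (div_le_one ha0).2 hx.2⟩,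
        mul_div_cancel₀ _ ha0.ne']
    have hpow : (m : ℝ) ^ sa ≠ 0 := (zpow_pos hm0 sa).ne'
    rw [hHdef, hK, ha]
    field_simp
    simp
  -- Transport the affine piece `[0, a]` around the circle with `F`.
  have hle : ∀ n : ℕ, F^[n] 0 ≤ F^[n + 1] 0 := by
    intro n
    rw [Function.iterate_succ_apply]
    exact hF.monotone.iterate n (by rw [hF0]; exact ha0.le)
  have hFmono : Monotone fun n : ℕ => F^[n] 0 := monotone_nat_of_le_succ hle
  have hFq0 : F^[q] 0 = r := by rw [hFq, zero_add]
  have hpieces : ∀ n : ℕ, n < q → ReflTransGen (Piece m H) (F^[n] 0) (F^[n + 1] 0) := by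
    intro n
    induction n with
    | zero => intro _; simpa [hF0] using ReflTransGen.single hHa
    | succ n ih =>
      intro hn
      have hv : F^[n + 1] 0 ≤ r := hFq0 ▸ hFmono hn.le
      have hu : 0 ≤ F^[n] 0 := hFmono (Nat.zero_le n)
      rw [Function.iterate_succ_apply' F n, Function.iterate_succ_apply' F (n + 1)]
      rw [Function.iterate_succ_apply' F n] at hv ih ⊢
      exact push_chain hm (zInvM_int m Na) hF hHF hFch hu hv (ih (by omega))
  have hchain : ∀ n : ℕ, n ≤ q → ReflTransGen (Piece m H) 0 (F^[n] 0) := by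
    intro n
    induction n with
    | zero => intro _; exact .refl
    | succ n ih => intro hn; exact (ih (by omega)).trans (hpieces n (by omega))
  have hHch := hchain q le_rfl
  rw [hFq0] at hHch
  obtain ⟨E, hE⟩ := exists_circle_equiv H hHr
  refine ⟨E, ⟨H, isPLmLift_of_chain hm hr0 H.strictMono hHr hHch, hE⟩, fun x => ?_⟩
  induction x using QuotientAddGroup.induction_on with
  | H x =>
    change E (f (x : AddCircle (r : ℝ))) = E (x : AddCircle (r : ℝ)) + _
    rw [hFf, hE, hE, hHF, AddCircle.coe_add]
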